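/- arXiv:1905.04497 — 3 statements merged into one kernel-verified Lean document; each statement's English description precedes it below -/
import Mathlib

section
/- Let S and E be real N×N matrices and k ≥ 0 an integer. Then the first-order expansion of (S+E)^k satisfies the remainder bound ‖(S+E)^k − S^k − Σ_{r=0}^{k−1} S^r E S^{k−r−1}‖ ≤ Σ_{r=2}^{k} (k choose r) ‖E‖^r ‖S‖^{k−r}. -/
open Matrix BigOperators

noncomputable def vnorm {N : ℕ} (x : Fin N → ℝ) : ℝ :=
  ‖(WithLp.equiv 2 (Fin N → ℝ)).symm x‖

noncomputable def opNorm {N : ℕ} (A : Matrix (Fin N) (Fin N) ℝ) : ℝ :=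
  ‖Matrix.toEuclideanCLM (𝕜 := ℝ) A‖

def IsPermMatrix {N : ℕ} (P : Matrix (Fin N) (Fin N) ℝ) : Prop :=
  (∀ i j, P i j = 0 ∨ P i j = 1) ∧ P.mulVec 1 = 1 ∧ Pᵀ.mulVec 1 = 1

noncomputable def gfilter {N : ℕ} (K : ℕ) (h : ℕ → ℝ) (S : Matrix (Fin N) (Fin N) ℝ) :
    Matrix (Fin N) (Fin N) ℝ :=
  ∑ k ∈ Finset.range (K + 1), h k • S ^ k

noncomputable def freq (K : ℕ) (h : ℕ → ℝ) (lam : ℝ) : ℝ :=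
  ∑ k ∈ Finset.range (K + 1), h k * lam ^ k

noncomputable def freqDeriv (K : ℕ) (h : ℕ → ℝ) (lam : ℝ) : ℝ :=
  ∑ k ∈ Finset.range (K + 1), (k : ℝ) * h k * lam ^ (k - 1)

/-!
The linear part and the remainder of the expansion of `(S + E) ^ k` satisfy recursions in `k` that
use only sums and products. Hence the norm of each is at most the same expression evaluated at the
real numbers `‖S‖` and `‖E‖`. Real numbers commute, so there the binomial theorem computes the
remainder.
-/

/-- The part of `(S + E) ^ k` of degree one in `E`, for `S` and `E` that need not commute; it is
the derivative of the `k`-th power map at `S` in the direction `E`. The truncated exponent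
`k - r - 1` is the true one because `r < k`. -/
def powLinearPart {A : Type*} [Semiring A] (S E : A) (k : ℕ) : A :=
  ∑ r ∈ Finset.range k, S ^ r * E * S ^ (k - r - 1)

/-- The remainder of the first-order expansion of `(S + E) ^ k` about `S`. -/
def powRemainder {A : Type*} [Ring A] (S E : A) (k : ℕ) : A :=
  (S + E) ^ k - S ^ k - powLinearPart S E k

lemma powLinearPart_succ {A : Type*} [Semiring A] (S E : A) (k : ℕ) :
    powLinearPart S E (k + 1) = powLinearPart S E k * S + S ^ k * E := by
  have raise_exponent : ∀ r ∈ Finset.range k,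
      S ^ r * E * S ^ (k + 1 - r - 1) = S ^ r * E * S ^ (k - r - 1) * S := by
    intro r hr
    have exponent_eq : k + 1 - r - 1 = k - r - 1 + 1 := by grind
    rw [exponent_eq, pow_succ, ← mul_assoc]
  rw [powLinearPart, Finset.sum_range_succ, Finset.sum_congr rfl raise_exponent, ← Finset.sum_mul]
  simp [powLinearPart]

lemma powRemainder_succ {A : Type*} [Ring A] (S E : A) (k : ℕ) :
    powRemainder S E (k + 1) = powRemainder S E k * (S + E) + powLinearPart S E k * E := by
  rw [powRemainder, powRemainder, powLinearPart_succ, pow_succ, pow_succ]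
  noncomm_ring

lemma powLinearPart_eq_mul {A : Type*} [CommSemiring A] (s e : A) (k : ℕ) :
    powLinearPart s e k = k * e * s ^ (k - 1) := by
  have term_eq : ∀ r ∈ Finset.range k, s ^ r * e * s ^ (k - r - 1) = e * s ^ (k - 1) := by
    intro r hr
    have exponent_eq : k - 1 = r + (k - r - 1) := by grind
    rw [exponent_eq, pow_add]
    ring
  rw [powLinearPart, Finset.sum_congr rfl term_eq]
  simp [mul_assoc]

lemma powRemainder_eq_sum_choose {A : Type*} [CommRing A] (s e : A) (k : ℕ) :
    powRemainder s e k = ∑ r ∈ Finset.Icc 2 k, (k.choose r : A) * e ^ r * s ^ (k - r) := by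
  obtain hk | hk := lt_or_ge k 2
  · interval_cases k <;> simp [powRemainder, powLinearPart]
  · have binomial : (s + e) ^ k =
        ∑ r ∈ Finset.range (k + 1), (k.choose r : A) * e ^ r * s ^ (k - r) := by
      rw [add_comm, add_pow]
      exact Finset.sum_congr rfl fun r _ ↦ by ring
    rw [powRemainder, powLinearPart_eq_mul, binomial, Finset.range_eq_Ico,
      Finset.sum_eq_sum_Ico_succ_bot (by lia), Finset.sum_eq_sum_Ico_succ_bot (by lia),
      Finset.Ico_add_one_right_eq_Icc]
    simp

section Norm

variable {A : Type*} [SeminormedRing A]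

-- Unlike `‖a ^ n‖ ≤ ‖a‖ ^ n`, this holds at `n = 0` whatever the norm of `1`.
lemma norm_pow_mul_le_pow_mul (a b : A) (n : ℕ) : ‖a ^ n * b‖ ≤ ‖a‖ ^ n * ‖b‖ := by
  obtain rfl | hn := n.eq_zero_or_pos
  · simp
  · grw [norm_mul_le, norm_pow_le' a hn]

lemma norm_powLinearPart_le (S E : A) (k : ℕ) :
    ‖powLinearPart S E k‖ ≤ powLinearPart ‖S‖ ‖E‖ k := by
  induction k with
  | zero => simp [powLinearPart]
  | succ k ih =>
    rw [powLinearPart_succ, powLinearPart_succ]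
    grw [norm_add_le, norm_mul_le, norm_pow_mul_le_pow_mul, ih]

lemma norm_powRemainder_le (S E : A) (k : ℕ) :
    ‖powRemainder S E k‖ ≤ powRemainder ‖S‖ ‖E‖ k := by
  induction k with
  | zero => simp [powRemainder, powLinearPart]
  | succ k ih =>
    rw [powRemainder_succ, powRemainder_succ]
    calc ‖powRemainder S E k * (S + E) + powLinearPart S E k * E‖
        ≤ ‖powRemainder S E k‖ * ‖S + E‖ + ‖powLinearPart S E k‖ * ‖E‖ :=
          norm_add_le_of_le (norm_mul_le _ _) (norm_mul_le _ _)
      _ ≤ powRemainder ‖S‖ ‖E‖ k * (‖S‖ + ‖E‖) + powLinearPart ‖S‖ ‖E‖ k * ‖E‖ := by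
          gcongr
          · exact (norm_nonneg _).trans ih
          · exact norm_add_le S E
          · exact norm_powLinearPart_le S E k

theorem matrix_power_first_order_expansion_general (S E : A) (k : ℕ) :
    ‖(S + E) ^ k - S ^ k - ∑ r ∈ Finset.range k, S ^ r * E * S ^ (k - r - 1)‖
      ≤ ∑ r ∈ Finset.Icc 2 k, (k.choose r : ℝ) * ‖E‖ ^ r * ‖S‖ ^ (k - r) :=
  (norm_powRemainder_le S E k).trans_eq (powRemainder_eq_sum_choose ‖S‖ ‖E‖ k)

end Norm

/-- First-order expansion of `(S + E)^k`: the remainder after subtracting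
`S^k` and the first-order term `Σ_{r<k} S^r E S^(k-r-1)` is bounded by
`Σ_{r=2}^k (k choose r) ‖E‖^r ‖S‖^(k-r)`. -/
theorem matrix_power_first_order_expansion {N : ℕ}
    (S E : Matrix (Fin N) (Fin N) ℝ) (k : ℕ) :
    opNorm ((S + E) ^ k - S ^ k - ∑ r ∈ Finset.range k, S ^ r * E * S ^ (k - r - 1))
      ≤ ∑ r ∈ Finset.Icc 2 k, (k.choose r : ℝ) * opNorm E ^ r * opNorm S ^ (k - r) := by
  simpa only [opNorm, map_sub, map_add, map_pow, map_sum, map_mul] using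
    matrix_power_first_order_expansion_general (toEuclideanCLM (𝕜 := ℝ) S)
      (toEuclideanCLM (𝕜 := ℝ) E) k
end

section
/- Let S be a real symmetric N×N matrix and P an N×N permutation matrix, and let σ : ℝ → ℝ be any function applied entrywise to vectors. Consider an L-layer graph neural network defined recursively as follows: the layer-0 features are x₀^g ∈ ℝ^N for g = 1,…,F₀, and for ℓ = 1,…,L the layer-ℓ features are x_ℓ^f = σ( Σ_{g=1}^{F_{ℓ−1}} H_ℓ^{fg}(S) x_{ℓ−1}^g ) for f = 1,…,F_ℓ, where each H_ℓ^{fg}(S) = Σ_{k=0}^K h_{ℓk}^{fg} S^k is a graph filter with fixed coefficients h_{ℓk}^{fg}. Let x̂_ℓ^f denote the features produced by the same recursion with S replaced by Pᵀ S P and layer-0 features Pᵀ x₀^g. Then x̂_ℓ^f = Pᵀ x_ℓ^f for every layer ℓ = 0,…,L and every feature index f; in particular, the GNN output satisfies Φ(Pᵀ S P, Pᵀ x) = Pᵀ Φ(S, x). -/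
open Matrix BigOperators

/-- The features of a graph neural network: `F ℓ` features at layer `ℓ`, filter
coefficients `h ℓ f g` for the filter of layer `ℓ+1` mapping input feature `g`
to output feature `f`, pointwise nonlinearity `σ`, shift operator `S`, and
input features `x0`. -/
noncomputable def gnn {N : ℕ} (K : ℕ) (σ : ℝ → ℝ) (F : ℕ → ℕ)
    (h : (ℓ : ℕ) → Fin (F (ℓ + 1)) → Fin (F ℓ) → ℕ → ℝ)
    (S : Matrix (Fin N) (Fin N) ℝ) (x0 : Fin (F 0) → Fin N → ℝ) :
    (ℓ : ℕ) → Fin (F ℓ) → Fin N → ℝ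
  | 0 => x0
  | ℓ + 1 => fun f i =>
      σ ((∑ g : Fin (F ℓ), (gfilter K (h ℓ f g) S).mulVec (gnn K σ F h S x0 ℓ g)) i)

/-- Feature widths of a GNN with a single input feature, a single output
feature (at layer `L`), and `F` features in each hidden layer. -/
def Ffun (L F : ℕ) : ℕ → ℕ := fun ℓ => if ℓ = 0 ∨ L ≤ ℓ then 1 else F

/-!
The entrywise nonlinearity is the only obstruction to carrying a linear change of variables `Q`
through the layers: if `Q` intertwines `S` with `S'`, it intertwines every polynomial in them, so
`Q` passes through a layer as soon as it commutes with applying `σ` entrywise. The transpose of a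
permutation matrix merely reindexes the entries of a vector, so it commutes with every `σ`, and
`P Pᵀ = 1` makes it intertwine `S` with `Pᵀ S P`.
-/

theorem exists_eq_single_one_of_sum_eq_one {ι R : Type*} [Fintype ι] [DecidableEq ι]
    [AddCommMonoidWithOne R] [CharZero R] {x : ι → R} (h01 : ∀ i, x i = 0 ∨ x i = 1)
    (hsum : ∑ i, x i = 1) : ∃ i, x = Pi.single i 1 := by
  classical
  have x_eq_ite (i : ι) : x i = if x i = 1 then 1 else 0 := by
    rcases h01 i with hi | hi <;> simp [hi]
  have card_eq_one : (Finset.univ.filter (x · = 1)).card = 1 := by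
    rwa [Finset.sum_congr rfl fun i _ => x_eq_ite i, Finset.sum_boole, Nat.cast_eq_one] at hsum
  obtain ⟨i, hi⟩ := Finset.card_eq_one.mp card_eq_one
  have eq_one_iff (j : ι) : x j = 1 ↔ j = i := by
    simpa using Finset.ext_iff.mp hi j
  refine ⟨i, funext fun j => ?_⟩
  rw [x_eq_ite, Pi.single_apply]
  simp only [eq_one_iff]

namespace IsPermMatrix

variable {N : ℕ} {P : Matrix (Fin N) (Fin N) ℝ}

theorem sum_row (hP : IsPermMatrix P) (i : Fin N) : ∑ j, P i j = 1 := by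
  simpa [mulVec, dotProduct] using congrFun hP.2.1 i

theorem sum_col (hP : IsPermMatrix P) (j : Fin N) : ∑ i, P i j = 1 := by
  simpa [mulVec, dotProduct] using congrFun hP.2.2 j

theorem exists_eq_permMatrix (hP : IsPermMatrix P) :
    ∃ e : Equiv.Perm (Fin N), P = e.permMatrix ℝ := by
  choose r hr using fun i => exists_eq_single_one_of_sum_eq_one (hP.1 i) (hP.sum_row i)
  have r_surjective : Function.Surjective r := by
    intro j
    obtain ⟨i, -, hi⟩ : ∃ i ∈ Finset.univ, P i j ≠ 0 :=
      Finset.exists_ne_zero_of_sum_ne_zero (by rw [hP.sum_col]; exact one_ne_zero)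
    refine ⟨i, by_contra fun hne => hi ?_⟩
    rw [hr, Pi.single_eq_of_ne' hne]
  refine ⟨Equiv.ofBijective r (Finite.surjective_iff_bijective.mp r_surjective), ?_⟩
  ext i j
  rw [hr]
  simp [PEquiv.toMatrix_apply, Pi.single_apply, eq_comm]

theorem mul_transpose_self (hP : IsPermMatrix P) : P * Pᵀ = 1 := by
  obtain ⟨e, rfl⟩ := hP.exists_eq_permMatrix
  rw [transpose_permMatrix, ← permMatrix_mul, inv_mul_cancel, permMatrix_one]

theorem transpose_mulVec_comp (hP : IsPermMatrix P) (σ : ℝ → ℝ) (x : Fin N → ℝ) :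
    Pᵀ *ᵥ (σ ∘ x) = σ ∘ (Pᵀ *ᵥ x) := by
  obtain ⟨e, rfl⟩ := hP.exists_eq_permMatrix
  rw [transpose_permMatrix, permMatrix_mulVec, permMatrix_mulVec, Function.comp_assoc]

end IsPermMatrix

theorem mul_pow_eq_pow_mul_of_mul_eq_mul {m n R : Type*} [Fintype m] [Fintype n]
    [DecidableEq m] [DecidableEq n] [Semiring R] {Q : Matrix m n R} {S : Matrix n n R}
    {S' : Matrix m m R} (hQ : Q * S = S' * Q) (k : ℕ) : Q * S ^ k = S' ^ k * Q := by
  induction k with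
  | zero => rw [pow_zero, pow_zero, Matrix.mul_one, Matrix.one_mul]
  | succ k ih =>
    calc Q * S ^ (k + 1) = Q * S ^ k * S := by rw [pow_succ, Matrix.mul_assoc]
      _ = S' ^ k * (Q * S) := by rw [ih, Matrix.mul_assoc]
      _ = S' ^ (k + 1) * Q := by rw [hQ, pow_succ, Matrix.mul_assoc]

section Intertwining

variable {M N : ℕ} {Q : Matrix (Fin M) (Fin N) ℝ} {S : Matrix (Fin N) (Fin N) ℝ}
  {S' : Matrix (Fin M) (Fin M) ℝ}

theorem mul_gfilter_eq_gfilter_mul (hQ : Q * S = S' * Q) (K : ℕ) (h : ℕ → ℝ) :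
    Q * gfilter K h S = gfilter K h S' * Q := by
  simp only [gfilter, Matrix.mul_sum, Matrix.sum_mul, Matrix.mul_smul, Matrix.smul_mul,
    mul_pow_eq_pow_mul_of_mul_eq_mul hQ]

theorem gnn_mulVec_of_intertwining (hQ : Q * S = S' * Q) {σ : ℝ → ℝ}
    (hσ : ∀ x : Fin N → ℝ, Q *ᵥ (σ ∘ x) = σ ∘ (Q *ᵥ x)) (K : ℕ) (F : ℕ → ℕ)
    (h : (ℓ : ℕ) → Fin (F (ℓ + 1)) → Fin (F ℓ) → ℕ → ℝ) (x0 : Fin (F 0) → Fin N → ℝ)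
    (ℓ : ℕ) (f : Fin (F ℓ)) :
    gnn K σ F h S' (fun g => Q *ᵥ x0 g) ℓ f = Q *ᵥ gnn K σ F h S x0 ℓ f := by
  induction ℓ with
  | zero => rfl
  | succ ℓ ih =>
    calc gnn K σ F h S' (fun g => Q *ᵥ x0 g) (ℓ + 1) f
        = σ ∘ ∑ g, gfilter K (h ℓ f g) S' *ᵥ gnn K σ F h S' (fun g => Q *ᵥ x0 g) ℓ g := rfl
      _ = σ ∘ ∑ g, Q *ᵥ (gfilter K (h ℓ f g) S *ᵥ gnn K σ F h S x0 ℓ g) := by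
          simp only [ih, mulVec_mulVec, mul_gfilter_eq_gfilter_mul hQ]
      _ = σ ∘ (Q *ᵥ ∑ g, gfilter K (h ℓ f g) S *ᵥ gnn K σ F h S x0 ℓ g) := by
          rw [mulVec_sum]
      _ = Q *ᵥ gnn K σ F h S x0 (ℓ + 1) f := (hσ _).symm

end Intertwining

theorem gnn_permutation_equivariance_general {N K : ℕ} (S : Matrix (Fin N) (Fin N) ℝ)
    {P : Matrix (Fin N) (Fin N) ℝ} (hP : IsPermMatrix P) (σ : ℝ → ℝ) (F : ℕ → ℕ)
    (h : (ℓ : ℕ) → Fin (F (ℓ + 1)) → Fin (F ℓ) → ℕ → ℝ) (x0 : Fin (F 0) → Fin N → ℝ)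
    (ℓ : ℕ) (f : Fin (F ℓ)) :
    gnn K σ F h (Pᵀ * S * P) (fun g => Pᵀ *ᵥ x0 g) ℓ f = Pᵀ *ᵥ gnn K σ F h S x0 ℓ f := by
  have intertwines : Pᵀ * S = Pᵀ * S * P * Pᵀ := by
    rw [Matrix.mul_assoc (Pᵀ * S), hP.mul_transpose_self, Matrix.mul_one]
  exact gnn_mulVec_of_intertwining intertwines (hP.transpose_mulVec_comp σ) K F h x0 ℓ f

/-- Permutation equivariance of graph neural networks: running the GNN on the
permuted shift operator `Pᵀ S P` with permuted input features `Pᵀ x₀^g`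
produces, at every layer `ℓ ≤ L` and feature `f`, the permutation `Pᵀ x_ℓ^f`
of the original features; in particular `Φ(Pᵀ S P, Pᵀ x) = Pᵀ Φ(S, x)`. -/
theorem gnn_permutation_equivariance {N K L : ℕ}
    (S P : Matrix (Fin N) (Fin N) ℝ) (hS : S.IsSymm) (hP : IsPermMatrix P)
    (σ : ℝ → ℝ) (F : ℕ → ℕ)
    (h : (ℓ : ℕ) → Fin (F (ℓ + 1)) → Fin (F ℓ) → ℕ → ℝ)
    (x0 : Fin (F 0) → Fin N → ℝ) :
    ∀ ℓ : ℕ, ℓ ≤ L → ∀ f : Fin (F ℓ),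
      gnn K σ F h (Pᵀ * S * P) (fun g => Pᵀ.mulVec (x0 g)) ℓ f
        = Pᵀ.mulVec (gnn K σ F h S x0 ℓ f) :=
  fun ℓ _ f => gnn_permutation_equivariance_general S hP σ F h x0 ℓ f
end

section
/- Let S and Ŝ be real symmetric N×N matrices, and let σ : ℝ → ℝ satisfy |σ(b) − σ(a)| ≤ |b − a| for all a, b and σ(0) = 0, applied entrywise. Consider an L-layer graph neural network with a single input feature (F₀ = 1), a single output feature (F_L = 1), and F features in each hidden layer (F_ℓ = F for 1 ≤ ℓ ≤ L−1), defined by the recursion x_ℓ^f = σ( Σ_{g=1}^{F_{ℓ−1}} H_ℓ^{fg}(S) x_{ℓ−1}^g ), with output Φ(S, x) = x_L^1 for input x₀^1 = x. Suppose that for every layer ℓ and indices f, g, the graph filters satisfy ‖H_ℓ^{fg}(S)‖ ≤ 1, ‖H_ℓ^{fg}(Ŝ)‖ ≤ 1, and ‖H_ℓ^{fg}(S) − H_ℓ^{fg}(Ŝ)‖ ≤ Δ ε. Then for every x ∈ ℝ^N, ‖Φ(S, x) − Φ(Ŝ, x)‖ ≤ Δ L F^{L−1} ε ‖x‖; in particular,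 for unit-norm inputs, the perturbation of the GNN output is at most Δ L F^{L−1} ε. -/
open Matrix BigOperators

/-!
For a single filter, `A x - B y = A (x - y) + (A - B) y` splits the error of a layer into the
propagated error of the previous layer and a fresh error proportional to the size of the features
`y`. Summing over the features of the previous layer multiplies both parts by its width, so that
features grow at most like the product of the widths, and by induction each of the `L` layers
contributes one fresh error of that size.
-/

section EuclideanNorm

variable {N : ℕ}

theorem vnorm_nonneg (x : Fin N → ℝ) : 0 ≤ vnorm x :=
  norm_nonneg _

theorem opNorm_nonneg (A : Matrix (Fin N) (Fin N) ℝ) : 0 ≤ opNorm A :=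
  norm_nonneg _

theorem vnorm_zero : vnorm (0 : Fin N → ℝ) = 0 :=
  norm_zero (E := EuclideanSpace ℝ (Fin N))

theorem opNorm_zero : opNorm (0 : Matrix (Fin N) (Fin N) ℝ) = 0 := by
  rw [opNorm, map_zero, norm_zero]

theorem vnorm_add_le (x y : Fin N → ℝ) : vnorm (x + y) ≤ vnorm x + vnorm y :=
  norm_add_le (WithLp.toLp 2 x) (WithLp.toLp 2 y)

theorem vnorm_smul (c : ℝ) (x : Fin N → ℝ) : vnorm (c • x) = |c| * vnorm x :=
  norm_smul c (WithLp.toLp 2 x)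

theorem vnorm_le_vnorm_of_abs_le {x y : Fin N → ℝ} (hxy : ∀ i, |x i| ≤ |y i|) :
    vnorm x ≤ vnorm y := by
  simp only [vnorm, EuclideanSpace.norm_eq, WithLp.equiv_symm_apply, Real.norm_eq_abs]
  exact Real.sqrt_le_sqrt <| Finset.sum_le_sum fun i _ =>
    pow_le_pow_left₀ (abs_nonneg _) (hxy i) 2

theorem vnorm_sum_le_card_mul {ι : Type*} [Fintype ι] {x : ι → Fin N → ℝ} {b : ℝ}
    (hx : ∀ i, vnorm (x i) ≤ b) : vnorm (∑ i, x i) ≤ Fintype.card ι * b :=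
  calc vnorm (∑ i, x i)
      ≤ ∑ i, vnorm (x i) :=
        Finset.le_sum_of_subadditive vnorm vnorm_zero.le vnorm_add_le _ _
    _ ≤ Fintype.card ι * b :=
        (Finset.sum_le_card_nsmul _ _ _ fun i _ => hx i).trans_eq (nsmul_eq_mul _ _)

theorem vnorm_mulVec_le (A : Matrix (Fin N) (Fin N) ℝ) (x : Fin N → ℝ) :
    vnorm (A *ᵥ x) ≤ opNorm A * vnorm x :=
  (Matrix.toEuclideanCLM (𝕜 := ℝ) A).le_opNorm (WithLp.toLp 2 x)

theorem vnorm_mulVec_le_of_le {A : Matrix (Fin N) (Fin N) ℝ} {x : Fin N → ℝ} {a b : ℝ}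
    (hA : opNorm A ≤ a) (hx : vnorm x ≤ b) : vnorm (A *ᵥ x) ≤ a * b :=
  (vnorm_mulVec_le A x).trans <|
    mul_le_mul hA hx (vnorm_nonneg x) ((opNorm_nonneg A).trans hA)

theorem vnorm_mulVec_sub_mulVec_le {A B : Matrix (Fin N) (Fin N) ℝ} {x y : Fin N → ℝ}
    {β δ c M : ℝ} (hA : opNorm A ≤ β) (hxy : vnorm (x - y) ≤ δ) (hAB : opNorm (A - B) ≤ c)
    (hy : vnorm y ≤ M) : vnorm (A *ᵥ x - B *ᵥ y) ≤ β * δ + c * M := by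
  have split : A *ᵥ x - B *ᵥ y = A *ᵥ (x - y) + (A - B) *ᵥ y := by
    rw [mulVec_sub, sub_mulVec, sub_add_sub_cancel]
  rw [split]
  exact (vnorm_add_le _ _).trans <|
    add_le_add (vnorm_mulVec_le_of_le hA hxy) (vnorm_mulVec_le_of_le hAB hy)

theorem vnorm_comp_sub_comp_le {σ : ℝ → ℝ} {C : NNReal} (hσ : LipschitzWith C σ)
    (x y : Fin N → ℝ) : vnorm (σ ∘ x - σ ∘ y) ≤ C * vnorm (x - y) :=
  calc vnorm (σ ∘ x - σ ∘ y)
      ≤ vnorm ((C : ℝ) • (x - y)) := vnorm_le_vnorm_of_abs_le fun i => by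
        simpa only [Pi.sub_apply, Function.comp_apply, Pi.smul_apply, smul_eq_mul, abs_mul,
          NNReal.abs_eq, Real.dist_eq] using hσ.dist_le_mul (x i) (y i)
    _ = C * vnorm (x - y) := by rw [vnorm_smul, NNReal.abs_eq]

end EuclideanNorm

section Layer

variable {N : ℕ} {ι : Type*} [Fintype ι] {σ : ℝ → ℝ} {C : NNReal}
  {A B : ι → Matrix (Fin N) (Fin N) ℝ} {x y : ι → Fin N → ℝ} {β δ c M : ℝ}

/-- One output feature of a neural network layer with nonlinearity `σ`: the input features `x g`
are passed through the linear maps `A g` (graph filters, or any other square matrices), summed, and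
`σ` is applied entrywise. -/
def layerOutput (σ : ℝ → ℝ) (A : ι → Matrix (Fin N) (Fin N) ℝ) (x : ι → Fin N → ℝ) : Fin N → ℝ :=
  σ ∘ ∑ g, A g *ᵥ x g

theorem layerOutput_zero (hσ0 : σ 0 = 0) : layerOutput σ A 0 = 0 := by
  ext i
  simp [layerOutput, hσ0]

theorem vnorm_layerOutput_sub_le (hσ : LipschitzWith C σ) (hA : ∀ g, opNorm (A g) ≤ β)
    (hxy : ∀ g, vnorm (x g - y g) ≤ δ) (hAB : ∀ g, opNorm (A g - B g) ≤ c)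
    (hy : ∀ g, vnorm (y g) ≤ M) :
    vnorm (layerOutput σ A x - layerOutput σ B y) ≤ C * (Fintype.card ι * (β * δ + c * M)) :=
  calc vnorm (layerOutput σ A x - layerOutput σ B y)
      ≤ C * vnorm (∑ g, A g *ᵥ x g - ∑ g, B g *ᵥ y g) := vnorm_comp_sub_comp_le hσ _ _
    _ = C * vnorm (∑ g, (A g *ᵥ x g - B g *ᵥ y g)) := by rw [Finset.sum_sub_distrib]
    _ ≤ C * (Fintype.card ι * (β * δ + c * M)) := by
        gcongr
        exact vnorm_sum_le_card_mul fun g =>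
          vnorm_mulVec_sub_mulVec_le (hA g) (hxy g) (hAB g) (hy g)

theorem vnorm_layerOutput_le (hσ : LipschitzWith C σ) (hσ0 : σ 0 = 0)
    (hA : ∀ g, opNorm (A g) ≤ β) (hx : ∀ g, vnorm (x g) ≤ M) :
    vnorm (layerOutput σ A x) ≤ C * (Fintype.card ι * (β * M)) := by
  simpa [layerOutput_zero hσ0] using
    vnorm_layerOutput_sub_le (y := 0) (B := A) (c := 0) (M := 0) hσ hA (by simpa using hx)
      (fun g => by rw [sub_self, opNorm_zero]) fun _ => vnorm_zero.le

end Layer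

section Network

variable {N K : ℕ} {σ : ℝ → ℝ} {C : NNReal} {F : ℕ → ℕ}
  {h : (ℓ : ℕ) → Fin (F (ℓ + 1)) → Fin (F ℓ) → ℕ → ℝ}
  {S T : Matrix (Fin N) (Fin N) ℝ} {x₀ : Fin (F 0) → Fin N → ℝ} {β c b : ℝ}

theorem gnn_succ (ℓ : ℕ) (f : Fin (F (ℓ + 1))) :
    gnn K σ F h S x₀ (ℓ + 1) f
      = layerOutput σ (fun g => gfilter K (h ℓ f g) S) (gnn K σ F h S x₀ ℓ) :=
  rfl

theorem vnorm_gnn_le {L : ℕ} (hσ : LipschitzWith C σ) (hσ0 : σ 0 = 0)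
    (hS : ∀ ℓ < L, ∀ f g, opNorm (gfilter K (h ℓ f g) S) ≤ β) (hx₀ : ∀ g, vnorm (x₀ g) ≤ b)
    (f : Fin (F L)) :
    vnorm (gnn K σ F h S x₀ L f) ≤ (C * β) ^ L * (∏ ℓ ∈ Finset.range L, (F ℓ : ℝ)) * b := by
  induction L with
  | zero => simpa [gnn] using hx₀ f
  | succ L ih =>
    have previous_layer := ih fun ℓ hℓ => hS ℓ (hℓ.trans L.lt_succ_self)
    rw [gnn_succ]
    refine (vnorm_layerOutput_le hσ hσ0 (hS L L.lt_succ_self f) previous_layer).trans_eq ?_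
    rw [Finset.prod_range_succ, Fintype.card_fin]
    ring

/-- The truncated exponent `L - 1` is harmless at `L = 0`, where the factor `L` vanishes. -/
theorem gnn_stability_general {L : ℕ} (hσ : LipschitzWith C σ) (hσ0 : σ 0 = 0)
    (hS : ∀ ℓ < L, ∀ f g, opNorm (gfilter K (h ℓ f g) S) ≤ β)
    (hT : ∀ ℓ < L, ∀ f g, opNorm (gfilter K (h ℓ f g) T) ≤ β)
    (hST : ∀ ℓ < L, ∀ f g, opNorm (gfilter K (h ℓ f g) S - gfilter K (h ℓ f g) T) ≤ c)
    (hx₀ : ∀ g, vnorm (x₀ g) ≤ b) (f : Fin (F L)) :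
    vnorm (gnn K σ F h S x₀ L f - gnn K σ F h T x₀ L f)
      ≤ c * L * C ^ L * β ^ (L - 1) * (∏ ℓ ∈ Finset.range L, (F ℓ : ℝ)) * b := by
  induction L with
  | zero => simp [gnn, vnorm_zero]
  | succ L ih =>
    have restrict {p : ℕ → Prop} (hp : ∀ ℓ < L + 1, p ℓ) : ∀ ℓ < L, p ℓ :=
      fun ℓ hℓ => hp ℓ (hℓ.trans L.lt_succ_self)
    have propagated_error := ih (restrict hS) (restrict hT) (restrict hST)
    have feature_bound := vnorm_gnn_le hσ hσ0 (restrict hT) hx₀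
    have pow_pred : L * β ^ (L - 1) * β = L * β ^ L := by
      rcases L.eq_zero_or_pos with rfl | hL
      · simp
      · rw [mul_assoc, pow_sub_one_mul hL.ne']
    rw [gnn_succ, gnn_succ]
    refine (vnorm_layerOutput_sub_le hσ (hS L L.lt_succ_self f) propagated_error
      (hST L L.lt_succ_self f) feature_bound).trans_eq ?_
    rw [Finset.prod_range_succ, Fintype.card_fin, Nat.add_sub_cancel, Nat.cast_succ]
    linear_combination
      C ^ (L + 1) * F L * c * (∏ ℓ ∈ Finset.range L, (F ℓ : ℝ)) * b * pow_pred

end Network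

theorem prod_range_Ffun {L : ℕ} (hL : 1 ≤ L) (F : ℕ) :
    ∏ ℓ ∈ Finset.range L, Ffun L F ℓ = F ^ (L - 1) := by
  obtain ⟨n, rfl⟩ := Nat.exists_eq_add_of_le' hL
  have hidden_width : ∀ ℓ ∈ Finset.range n, Ffun (n + 1) F (ℓ + 1) = F := fun ℓ hℓ =>
    if_neg (by have := Finset.mem_range.mp hℓ; omega)
  rw [Finset.prod_range_succ', Finset.prod_congr rfl hidden_width]
  simp [Ffun]

/-- Stability of GNNs: for an `L`-layer GNN with single input and output
features and `F` hidden features per layer, normalized Lipschitz nonlinearity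
`σ` with `σ 0 = 0`, filters with `‖H_ℓ^{fg}(S)‖ ≤ 1`, `‖H_ℓ^{fg}(Ŝ)‖ ≤ 1`, and
`‖H_ℓ^{fg}(S) − H_ℓ^{fg}(Ŝ)‖ ≤ Δ ε`, the GNN outputs satisfy
`‖Φ(S, x) − Φ(Ŝ, x)‖ ≤ Δ L F^(L−1) ε ‖x‖`. -/
theorem gnn_stability {N K L F : ℕ} (hL : 1 ≤ L)
    (S Shat : Matrix (Fin N) (Fin N) ℝ) (hS : S.IsSymm) (hShat : Shat.IsSymm)
    (σ : ℝ → ℝ) (hσ : ∀ a b : ℝ, |σ b - σ a| ≤ |b - a|) (hσ0 : σ 0 = 0)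
    (h : (ℓ : ℕ) → Fin (Ffun L F (ℓ + 1)) → Fin (Ffun L F ℓ) → ℕ → ℝ)
    (Δ ε : ℝ)
    (hfilterS : ∀ (ℓ : ℕ) (f : Fin (Ffun L F (ℓ + 1))) (g : Fin (Ffun L F ℓ)),
      opNorm (gfilter K (h ℓ f g) S) ≤ 1)
    (hfilterShat : ∀ (ℓ : ℕ) (f : Fin (Ffun L F (ℓ + 1))) (g : Fin (Ffun L F ℓ)),
      opNorm (gfilter K (h ℓ f g) Shat) ≤ 1)
    (hfilterdiff : ∀ (ℓ : ℕ) (f : Fin (Ffun L F (ℓ + 1))) (g : Fin (Ffun L F ℓ)),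
      opNorm (gfilter K (h ℓ f g) S - gfilter K (h ℓ f g) Shat) ≤ Δ * ε) :
    ∀ x : Fin N → ℝ, ∀ f : Fin (Ffun L F L),
      vnorm (gnn K σ (Ffun L F) h S (fun _ => x) L f
              - gnn K σ (Ffun L F) h Shat (fun _ => x) L f)
        ≤ Δ * L * (F : ℝ) ^ (L - 1) * ε * vnorm x := by
  intro x f
  have hσ_lipschitz : LipschitzWith 1 σ := LipschitzWith.mk_one fun a b => hσ b a
  refine (gnn_stability_general hσ_lipschitz hσ0 (fun ℓ _ => hfilterS ℓ)
    (fun ℓ _ => hfilterShat ℓ) (fun ℓ _ => hfilterdiff ℓ) (fun _ => le_rfl) f).trans_eq ?_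
  rw [← Nat.cast_prod, prod_range_Ffun hL, Nat.cast_pow, NNReal.coe_one, one_pow, one_pow]
  ring
end
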